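/- For every function f : 𝔹^N → 𝔹^N, the map G_f : X → X defined by G_f(S,E) = (σ(S), F_f(S^0,E)) is continuous on the metric space (X,d). -/

import Mathlib

/-!
The shift expands `dS` by a factor of at most `10`: splitting off the first term of the series
gives `dS S S' = (9 / N) * |S 0 - S' 0| / 10 + dS (σ S) (σ S') / 10` (`dS_eq`). Both metrics
detect discrete data: `dE E E' ≥ 1` when `E ≠ E'`, and `dS S S' ≥ 9 / (10 * N)` when
`S 0 ≠ S' 0`. So if `dX X Y < min (9 / (10 * N)) (ε / 10)`, then `X` and `Y` have the same Boolean
part and the same first strategy term, hence their images have the same Boolean part, and the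
images are at distance `dS (σ S) (σ S') ≤ 10 * dS S S' < ε`.
-/

/-- Hamming distance on 𝔹^N : d_e(E,E') = Σ_k δ(E_k, E'_k), δ the discrete Boolean metric. -/
noncomputable def dE (N : ℕ) (E E' : Fin N → Bool) : ℝ :=
  ∑ k : Fin N, if E k = E' k then 0 else 1

/-- d_s(S,S') = (9/N) Σ_{k=1}^∞ |S^k − S'^k| / 10^k (sequences indexed from 0 in Lean). -/
noncomputable def dS (N : ℕ) (S S' : ℕ → Fin N) : ℝ :=
  (9 / N) * ∑' k : ℕ, |((S k : ℕ) : ℝ) - ((S' k : ℕ) : ℝ)| / 10 ^ (k + 1)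

/-- d((S,E),(S',E')) = d_e(E,E') + d_s(S,S') on X = ⟦1,N⟧^ℕ × 𝔹^N.
    (Points of X are stored as pairs (S, E).) -/
noncomputable def dX (N : ℕ) (X Y : (ℕ → Fin N) × (Fin N → Bool)) : ℝ :=
  dE N X.2 Y.2 + dS N X.1 Y.1

/-- F_f(k,E) : the k-th component is replaced by f(E)_k, the others are unchanged. -/
def Ff (N : ℕ) (f : (Fin N → Bool) → Fin N → Bool) (k : Fin N) (E : Fin N → Bool) :
    Fin N → Bool :=
  fun j => if j = k then f E j else E j

/-- G_f(S,E) = (σ(S), F_f(S^0,E)), where σ is the shift. -/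
def Gf (N : ℕ) (f : (Fin N → Bool) → Fin N → Bool)
    (X : (ℕ → Fin N) × (Fin N → Bool)) : (ℕ → Fin N) × (Fin N → Bool) :=
  (fun n => X.1 (n + 1), Ff N f (X.1 0) X.2)

/-- The vectorial Boolean negation. -/
def negAll (N : ℕ) : (Fin N → Bool) → Fin N → Bool := fun x i => !(x i)

theorem dE_self (N : ℕ) (E : Fin N → Bool) : dE N E E = 0 := by
  simp [dE]

theorem dE_nonneg (N : ℕ) (E E' : Fin N → Bool) : 0 ≤ dE N E E' :=
  Finset.sum_nonneg fun k _ => by split_ifs <;> norm_num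

theorem eq_of_dE_lt_one (N : ℕ) (E E' : Fin N → Bool) (h : dE N E E' < 1) : E = E' := by
  by_contra hne
  obtain ⟨k, hk⟩ := Function.ne_iff.mp hne
  have hle : (if E k = E' k then (0 : ℝ) else 1) ≤ dE N E E' :=
    Finset.single_le_sum (f := fun k => if E k = E' k then (0 : ℝ) else 1)
      (fun i _ => by split_ifs <;> norm_num) (Finset.mem_univ k)
  rw [if_neg hk] at hle
  linarith

theorem dS_nonneg (N : ℕ) (S S' : ℕ → Fin N) : 0 ≤ dS N S S' :=
  mul_nonneg (by positivity) (tsum_nonneg fun k => by positivity)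

/-- The series defining `dS` converges, being dominated by `N / 10 ^ k`; its `tsum` is therefore
a genuine sum. -/
theorem summable_dS (N : ℕ) (S S' : ℕ → Fin N) :
    Summable fun k : ℕ => |((S k : ℕ) : ℝ) - ((S' k : ℕ) : ℝ)| / 10 ^ (k + 1) := by
  have hgeo : Summable fun k : ℕ => (N : ℝ) * (1 / 10 : ℝ) ^ k :=
    (summable_geometric_of_lt_one (by norm_num) (by norm_num)).mul_left _
  refine Summable.of_nonneg_of_le (fun k => by positivity) (fun k => ?_) hgeo
  have h1 : ((S k : ℕ) : ℝ) ≤ N := by exact_mod_cast (S k).isLt.le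
  have h2 : ((S' k : ℕ) : ℝ) ≤ N := by exact_mod_cast (S' k).isLt.le
  have h3 : |((S k : ℕ) : ℝ) - ((S' k : ℕ) : ℝ)| ≤ N :=
    abs_sub_le_of_nonneg_of_le (Nat.cast_nonneg _) h1 (Nat.cast_nonneg _) h2
  rw [one_div_pow, mul_one_div]
  have h4 : (10 : ℝ) ^ k ≤ 10 ^ (k + 1) := pow_le_pow_right₀ (by norm_num) (Nat.le_succ k)
  gcongr

/-- Splitting off the first term of `dS`: the remainder is a tenth of the distance of the
shifted sequences. -/
theorem dS_eq (N : ℕ) (S S' : ℕ → Fin N) :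
    dS N S S' = 9 / N * (|((S 0 : ℕ) : ℝ) - ((S' 0 : ℕ) : ℝ)| / 10)
      + dS N (fun n => S (n + 1)) (fun n => S' (n + 1)) / 10 := by
  have hshift : ∀ k : ℕ, |((S (k + 1) : ℕ) : ℝ) - ((S' (k + 1) : ℕ) : ℝ)| / 10 ^ (k + 1 + 1)
      = |((S (k + 1) : ℕ) : ℝ) - ((S' (k + 1) : ℕ) : ℝ)| / 10 ^ (k + 1) / 10 := fun k => by
    rw [pow_succ _ (k + 1), div_div]
  unfold dS
  rw [(summable_dS N S S').tsum_eq_zero_add]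
  simp only [hshift, tsum_div_const, zero_add, pow_one]
  ring

theorem head_eq_of_dS_lt (N : ℕ) (S S' : ℕ → Fin N) (h : dS N S S' < 9 / (10 * N)) :
    S 0 = S' 0 := by
  by_contra hne
  -- Distinct integers are at distance at least one.
  have h1 : (1 : ℝ) ≤ |((S 0 : ℕ) : ℝ) - ((S' 0 : ℕ) : ℝ)| := by
    have hz : ((S 0 : ℕ) : ℤ) - ((S' 0 : ℕ) : ℤ) ≠ 0 := by
      intro h0
      exact hne (Fin.ext (by omega))
    exact_mod_cast Int.one_le_abs hz
  have h2 := dS_eq N S S'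
  have h3 := dS_nonneg N (fun n => S (n + 1)) (fun n => S' (n + 1))
  have h4 : (9 : ℝ) / N * (1 / 10)
      ≤ 9 / N * (|((S 0 : ℕ) : ℝ) - ((S' 0 : ℕ) : ℝ)| / 10) := by gcongr
  have h5 : (9 : ℝ) / (10 * N) = 9 / N * (1 / 10) := by
    rw [div_mul_div_comm, mul_one, mul_comm (10 : ℝ)]
  linarith

/- STATEMENT 1: for every f : 𝔹^N → 𝔹^N, G_f is continuous on the metric space (X,d). -/
theorem Gf_continuous (N : ℕ) (hN : 1 ≤ N) (f : (Fin N → Bool) → Fin N → Bool) :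
    ∀ X : (ℕ → Fin N) × (Fin N → Bool), ∀ ε > (0 : ℝ), ∃ δ > (0 : ℝ),
      ∀ Y : (ℕ → Fin N) × (Fin N → Bool),
        dX N X Y < δ → dX N (Gf N f X) (Gf N f Y) < ε := by
  rintro ⟨S, E⟩ ε hε
  have hN1 : (1 : ℝ) ≤ N := by exact_mod_cast hN
  refine ⟨min (9 / (10 * N)) (ε / 10), by positivity, ?_⟩
  rintro ⟨S', E'⟩ hd
  obtain ⟨hd1, hd2⟩ := lt_min_iff.mp hd
  simp only [dX] at hd1 hd2
  have hE0 := dE_nonneg N E E'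
  have hS0 := dS_nonneg N S S'
  have hlt : (9 : ℝ) / (10 * N) < 1 := by
    rw [div_lt_one (by positivity)]
    linarith
  obtain rfl : E = E' := eq_of_dE_lt_one N E E' (by linarith)
  have hhead : S 0 = S' 0 := head_eq_of_dS_lt N S S' (by linarith)
  have hsplit := dS_eq N S S'
  rw [hhead, sub_self, abs_zero, zero_div, mul_zero, zero_add] at hsplit
  simp only [dX, Gf, hhead, dE_self]
  linarith
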